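/- arXiv:1909.02676 — 2 statements merged into one kernel-verified Lean document; each statement's English description precedes it below -/
import Mathlib

section
/- Let n ≥ 1 and fix a signed permutation matrix q with det q = 1. Then the set of k ∈ SO(n,ℝ) for which there exist a matrix u upper triangular with positive diagonal, a unit lower triangular matrix l, and a diagonal matrix m with diagonal entries in {1,−1} and det m = 1, such that k = u·l·m·q, is open and dense in SO(n,ℝ) (with the subspace topology induced from the normed space of real n×n matrices). -/
open Matrix

/-- Unit lower triangular: `1`s on the diagonal, `0`s above it. -/
def IsUnitLower {n : ℕ} (M : Matrix (Fin n) (Fin n) ℝ) : Prop :=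
  (∀ i, M i i = 1) ∧ ∀ i j : Fin n, i < j → M i j = 0

/-- Upper triangular with strictly positive diagonal entries. -/
def IsUpperPos {n : ℕ} (M : Matrix (Fin n) (Fin n) ℝ) : Prop :=
  (∀ i j : Fin n, j < i → M i j = 0) ∧ ∀ i, 0 < M i i

/-- `SO(n,ℝ)`. -/
def IsSO {n : ℕ} (k : Matrix (Fin n) (Fin n) ℝ) : Prop :=
  kᵀ * k = 1 ∧ k.det = 1

/-- Signed permutation matrix: exactly one nonzero entry, equal to `±1`,
in each row and column. -/
def IsSignedPerm {n : ℕ} (q : Matrix (Fin n) (Fin n) ℝ) : Prop :=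
  ∃ σ : Equiv.Perm (Fin n), ∃ ε : Fin n → ℝ, (∀ i, ε i = 1 ∨ ε i = -1) ∧
    ∀ a b : Fin n, q a b = if a = σ b then ε b else 0

/-- Matrices in `SO(n,ℝ)` admitting a factorization `u · l · m · q` with `u` upper
triangular with positive diagonal, `l` unit lower triangular, and `m` diagonal with
entries `±1` and determinant `1`, viewed inside `SO(n,ℝ)` with its subspace topology. -/
def FactorSet {n : ℕ} (q : Matrix (Fin n) (Fin n) ℝ) :
    Set {k : Matrix (Fin n) (Fin n) ℝ // IsSO k} :=
  { k | ∃ u l : Matrix (Fin n) (Fin n) ℝ, ∃ d : Fin n → ℝ,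
      IsUpperPos u ∧ IsUnitLower l ∧ (∀ i, d i = 1 ∨ d i = -1) ∧
      (Matrix.diagonal d).det = 1 ∧ (k : Matrix (Fin n) (Fin n) ℝ) = u * l * Matrix.diagonal d * q }

/-!
For `det q > 0`, a matrix `k` of `SO(n,ℝ)` lies in `FactorSet q` exactly when all trailing principal
minors of `k * q⁻¹` are nonzero; this condition is open. For density, the matrix
`(k + t • q) * q⁻¹ = k * q⁻¹ + t • 1` has nonzero trailing minors for all but finitely many `t`,
because each of these minors is a monic polynomial in `t`. Gram–Schmidt on the rows of `k + t • q`,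
starting from the last row, brings this matrix back to `SO(n,ℝ)`: it multiplies on the left by an
upper triangular matrix, which preserves the nonvanishing of the trailing minors, it is continuous
at `k`, and it fixes `k`.
-/

open Filter
open scoped Topology

section TrailingMinors

variable {ι R : Type*} [LinearOrder ι]

/-- The lower-right block of `A` with rows and columns `≥ i`; its determinant is a trailing
principal minor of `A`. -/
def trailingBlock (A : Matrix ι ι R) (i : ι) : Matrix {a // i ≤ a} {a // i ≤ a} R :=
  A.toSquareBlockProp (i ≤ ·)

variable [Fintype ι]

/-- All trailing principal minors are nonzero. This is the condition for `A` to be a product of an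
invertible upper and an invertible lower triangular matrix, in this order. -/
def HasNonzeroTrailingMinors [CommRing R] (A : Matrix ι ι R) : Prop :=
  ∀ i, (trailingBlock A i).det ≠ 0

lemma trailingBlock_mul_of_isUpperTriangular [CommRing R] {U : Matrix ι ι R}
    (hU : U.IsUpperTriangular) (A : Matrix ι ι R) (i : ι) :
    trailingBlock (U * A) i = trailingBlock U i * trailingBlock A i := by
  have hzero : U.toBlock (i ≤ ·) (fun a => ¬ i ≤ a) = 0 := by
    ext a c
    exact hU ((not_le.mp c.2).trans_le a.2)
  have hsplit := toBlock_mul_eq_add (i ≤ ·) (i ≤ ·) (i ≤ ·) U A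
  rwa [hzero, Matrix.zero_mul, add_zero] at hsplit

lemma hasNonzeroTrailingMinors_of_isUpperTriangular [CommRing R] [IsDomain R]
    {U : Matrix ι ι R} (hU : U.IsUpperTriangular) (hdiag : ∀ i, U i i ≠ 0) :
    HasNonzeroTrailingMinors U := fun i => by
  have hblock : (trailingBlock U i).IsUpperTriangular := fun _ _ hab => hU hab
  rw [det_of_isUpperTriangular hblock]
  exact Finset.prod_ne_zero_iff.mpr fun a _ => hdiag a

lemma hasNonzeroTrailingMinors_of_isLowerTriangular [CommRing R] [IsDomain R]
    {L : Matrix ι ι R} (hL : L.IsLowerTriangular) (hdiag : ∀ i, L i i ≠ 0) :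
    HasNonzeroTrailingMinors L := fun i => by
  have hblock : (trailingBlock L i).IsLowerTriangular := fun _ _ hab => hL hab
  rw [det_of_isLowerTriangular _ hblock]
  exact Finset.prod_ne_zero_iff.mpr fun a _ => hdiag a

lemma hasNonzeroTrailingMinors_mul_iff [CommRing R] [IsDomain R] {U : Matrix ι ι R}
    (hU : U.IsUpperTriangular) (hdiag : ∀ i, U i i ≠ 0) (A : Matrix ι ι R) :
    HasNonzeroTrailingMinors (U * A) ↔ HasNonzeroTrailingMinors A :=
  forall_congr' fun i => by
    rw [trailingBlock_mul_of_isUpperTriangular hU, det_mul,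
      mul_ne_zero_iff_left (hasNonzeroTrailingMinors_of_isUpperTriangular hU hdiag i)]

lemma exists_isLowerTriangular_mul_unitUpper [Field R] {A : Matrix ι ι R}
    (hA : HasNonzeroTrailingMinors A) :
    ∃ W : Matrix ι ι R, W.IsLowerTriangular ∧ (A * W).IsUpperTriangular ∧
      ∀ i, (A * W) i i = 1 := by
  -- Column `j` of `W` is column `j` of the inverse of the trailing block at `j`, padded by zeros.
  let W : Matrix ι ι R := of fun a j =>
    if h : j ≤ a then (trailingBlock A j)⁻¹ ⟨a, h⟩ ⟨j, le_rfl⟩ else 0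
  have hW : W.IsLowerTriangular := fun a j haj => dif_neg (not_le.mpr haj)
  have hAW {a j : ι} (hja : j ≤ a) :
      (A * W) a j = (1 : Matrix {a // j ≤ a} {a // j ≤ a} R) ⟨a, hja⟩ ⟨j, le_rfl⟩ := by
    have hcol (c : {c // j ≤ c}) : W c j = (trailingBlock A j)⁻¹ c ⟨j, le_rfl⟩ := dif_pos c.2
    have hpad (c : {c // ¬ j ≤ c}) : W c j = 0 := dif_neg c.2
    rw [← mul_nonsing_inv (trailingBlock A j) (hA j).isUnit, mul_apply, mul_apply,
      ← Fintype.sum_subtype_add_sum_subtype (j ≤ ·)]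
    simp only [hcol, hpad, mul_zero, Finset.sum_const_zero, add_zero]
    rfl
  refine ⟨W, hW, fun a j (hja : j < a) => ?_, fun i => ?_⟩
  · rw [hAW hja.le, one_apply_ne (Subtype.coe_ne_coe.mp hja.ne')]
  · rw [hAW le_rfl, one_apply_eq]

theorem exists_unitUpper_mul_diagonal_mul_unitLower [Field R] {A : Matrix ι ι R}
    (hA : HasNonzeroTrailingMinors A) :
    ∃ (U L : Matrix ι ι R) (c : ι → R), U.IsUpperTriangular ∧ (∀ i, U i i = 1) ∧
      L.IsLowerTriangular ∧ (∀ i, L i i = 1) ∧ (∀ i, c i ≠ 0) ∧ A = U * diagonal c * L := by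
  obtain ⟨W, hW, hAW, hAWdiag⟩ := exists_isLowerTriangular_mul_unitUpper hA
  have hdet : A.det * W.det = 1 := by
    rw [← det_mul, det_of_isUpperTriangular hAW, Finset.prod_eq_one fun i _ => hAWdiag i]
  have hWunit : IsUnit W.det := .of_mul_eq_one_right _ hdet
  let := W.invertibleOfIsUnitDet hWunit
  have hV : W⁻¹.IsLowerTriangular := blockTriangular_inv_of_blockTriangular hW
  have hVdiag : ∀ i, W⁻¹ i i ≠ 0 := by
    have hVdet : W⁻¹.det ≠ 0 := (W.isUnit_nonsing_inv_det hWunit).ne_zero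
    rw [det_of_isLowerTriangular _ hV] at hVdet
    exact fun i => Finset.prod_ne_zero_iff.mp hVdet i (Finset.mem_univ i)
  refine ⟨A * W, diagonal (fun i => (W⁻¹ i i)⁻¹) * W⁻¹, fun i => W⁻¹ i i, hAW, hAWdiag,
    (blockTriangular_diagonal _).mul hV, fun i => ?_, hVdiag, ?_⟩
  · rw [diagonal_mul, inv_mul_cancel₀ (hVdiag i)]
  · have hcancel : diagonal (fun i => W⁻¹ i i) * diagonal (fun i => (W⁻¹ i i)⁻¹) = 1 := by
      simp only [diagonal_mul_diagonal, mul_inv_cancel₀ (hVdiag _), diagonal_one]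
    rw [← Matrix.mul_assoc, Matrix.mul_assoc _ _ (diagonal _), hcancel, Matrix.mul_one,
      mul_nonsing_inv_cancel_right _ _ hWunit]

lemma isOpen_setOf_hasNonzeroTrailingMinors [CommRing R] [TopologicalSpace R]
    [IsTopologicalRing R] [T1Space R] :
    IsOpen {A : Matrix ι ι R | HasNonzeroTrailingMinors A} := by
  simp only [HasNonzeroTrailingMinors, Set.ofPred_forall]
  refine isOpen_iInter_of_finite fun i => isOpen_ne.preimage ?_
  exact (continuous_id.matrix_submatrix _ _).matrix_det

lemma eventually_det_add_smul_one_ne_zero {K κ : Type*} [Fintype κ] [DecidableEq κ]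
    [CommRing K] [IsDomain K] [TopologicalSpace K] [T1Space K] (A : Matrix κ κ K) (t₀ : K) :
    ∀ᶠ t in 𝓝[≠] t₀, (A + t • (1 : Matrix κ κ K)).det ≠ 0 := by
  have hroots : {t | (-A).charpoly.IsRoot t}.Finite :=
    Polynomial.finite_setOfPred_isRoot (charpoly_monic _).ne_zero
  filter_upwards [nhdsNE_le_cofinite t₀ hroots.compl_mem_cofinite] with t ht
  simpa [Polynomial.IsRoot, eval_charpoly, smul_one_eq_diagonal, add_comm] using ht

lemma eventually_hasNonzeroTrailingMinors_add_smul_one [CommRing R] [IsDomain R]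
    [TopologicalSpace R] [T1Space R] (A : Matrix ι ι R) (t₀ : R) :
    ∀ᶠ t in 𝓝[≠] t₀, HasNonzeroTrailingMinors (A + t • (1 : Matrix ι ι R)) := by
  refine eventually_all.mpr fun i => ?_
  have hblock (t : R) :
      trailingBlock (A + t • (1 : Matrix ι ι R)) i = trailingBlock A i + t • 1 := by
    ext a b
    simp [trailingBlock, toSquareBlockProp, one_apply, Subtype.ext_iff]
  simpa only [hblock] using eventually_det_add_smul_one_ne_zero (trailingBlock A i) t₀

end TrailingMinors

section GramSchmidt

open InnerProductSpace

variable {𝕜 E ι : Type*} [RCLike 𝕜] [NormedAddCommGroup E] [InnerProductSpace 𝕜 E]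
  [LinearOrder ι] [LocallyFiniteOrderBot ι] [WellFoundedLT ι]

lemma inner_gramSchmidt_self_left (f : ι → E) (i : ι) :
    inner 𝕜 (gramSchmidt 𝕜 f i) (f i) = (‖gramSchmidt 𝕜 f i‖ : 𝕜) ^ 2 := by
  have horth : ∀ j ∈ Finset.Iio i, inner 𝕜 (gramSchmidt 𝕜 f i)
      ((inner 𝕜 (gramSchmidt 𝕜 f j) (f i) / (‖gramSchmidt 𝕜 f j‖ : 𝕜) ^ 2) •
        gramSchmidt 𝕜 f j) = 0 := fun j hj => by
    rw [inner_smul_right, gramSchmidt_orthogonal 𝕜 f (Finset.mem_Iio.mp hj).ne', mul_zero]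
  conv_lhs => rw [gramSchmidt_def'' 𝕜 f i]
  rw [inner_add_right, inner_sum, Finset.sum_eq_zero horth, add_zero, inner_self_eq_norm_sq_to_K]

lemma inner_gramSchmidtNormed_self_left (f : ι → E) (i : ι) :
    inner 𝕜 (gramSchmidtNormed 𝕜 f i) (f i) = ‖gramSchmidt 𝕜 f i‖ := by
  rw [gramSchmidtNormed, inner_smul_left, inner_gramSchmidt_self_left, map_inv₀,
    RCLike.conj_ofReal, sq, ← mul_assoc, inv_mul_mul_self]

lemma gramSchmidtNormed_of_orthonormal {f : ι → E} (hf : Orthonormal 𝕜 f) :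
    gramSchmidtNormed 𝕜 f = f := by
  funext i
  rw [gramSchmidtNormed, gramSchmidt_of_orthogonal 𝕜 hf.2, hf.1 i, RCLike.ofReal_one, inv_one,
    one_smul]

lemma continuousAt_gramSchmidt {f₀ : ι → E} (hf₀ : LinearIndependent 𝕜 f₀) (i : ι) :
    ContinuousAt (fun f : ι → E => gramSchmidt 𝕜 f i) f₀ := by
  induction i using WellFoundedLT.induction with
  | ind i ih =>
    simp only [gramSchmidt_def 𝕜 _ i, Submodule.starProjection_singleton, RCLike.ofReal_pow]
    refine (continuous_apply i).continuousAt.sub (tendsto_finsetSum _ fun j hj => ?_)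
    have hj := ih j (Finset.mem_Iio.mp hj)
    have hne : (‖gramSchmidt 𝕜 f₀ j‖ : 𝕜) ^ 2 ≠ 0 := by simpa using gramSchmidt_ne_zero j hf₀
    exact ((hj.inner (continuous_apply i).continuousAt).div
      ((RCLike.continuous_ofReal.continuousAt.comp hj.norm).pow 2) hne).smul hj

lemma continuousAt_gramSchmidtNormed {f₀ : ι → E} (hf₀ : LinearIndependent 𝕜 f₀) (i : ι) :
    ContinuousAt (fun f : ι → E => gramSchmidtNormed 𝕜 f i) f₀ := by
  have hgs := continuousAt_gramSchmidt hf₀ i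
  have hne : (‖gramSchmidt 𝕜 f₀ i‖ : 𝕜) ≠ 0 := by simpa using gramSchmidt_ne_zero i hf₀
  exact ((RCLike.continuous_ofReal.continuousAt.comp hgs.norm).inv₀ hne).smul hgs

end GramSchmidt

section RowOrthonormalization

open InnerProductSpace hiding toDual
open OrderDual

variable {ι : Type*}

/-- The rows of `A` as Euclidean vectors, listed from the last to the first: this order makes the
Gram–Schmidt change of basis upper triangular. -/
def reversedRows (A : Matrix ι ι ℝ) : ιᵒᵈ → EuclideanSpace ℝ ι :=
  fun i => WithLp.toLp 2 (A (ofDual i))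

lemma continuous_reversedRows : Continuous (reversedRows (ι := ι)) :=
  continuous_pi fun i => (PiLp.continuous_toLp 2 _).comp (continuous_apply (ofDual i))

variable [Fintype ι]

lemma mul_transpose_apply_eq_inner_reversedRows (A B : Matrix ι ι ℝ) (i j : ι) :
    (A * Bᵀ) i j = inner ℝ (reversedRows B (toDual j)) (reversedRows A (toDual i)) := by
  simp [reversedRows, mul_apply, PiLp.inner_apply]

lemma orthonormal_reversedRows_iff [DecidableEq ι] {A : Matrix ι ι ℝ} :
    Orthonormal ℝ (reversedRows A) ↔ A * Aᵀ = 1 := by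
  rw [orthonormal_iff_ite, ← Matrix.ext_iff, forall_comm, OrderDual.forall]
  refine forall_congr' fun i => ?_
  rw [OrderDual.forall]
  refine forall_congr' fun j => ?_
  rw [mul_transpose_apply_eq_inner_reversedRows, one_apply]
  simp only [toDual_inj, eq_comm]

lemma linearIndependent_reversedRows [DecidableEq ι] {A : Matrix ι ι ℝ} (hA : A.det ≠ 0) :
    LinearIndependent ℝ (reversedRows A) :=
  ((linearIndependent_rows_of_det_ne_zero hA).comp ofDual ofDual.injective).map'
    (WithLp.linearEquiv 2 ℝ (ι → ℝ)).symm.toLinearMap (LinearEquiv.ker _)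

variable [LinearOrder ι] [LocallyFiniteOrderTop ι]

/-- For invertible `A`, the orthogonal factor `k` of the decomposition `A = u * k` with `u` upper
triangular with positive diagonal, obtained from the Gram–Schmidt process on the rows of `A`,
starting from the last one. -/
noncomputable def orthonormalizedRows (A : Matrix ι ι ℝ) : Matrix ι ι ℝ :=
  of fun i => (gramSchmidtNormed ℝ (reversedRows A) (toDual i)).ofLp

lemma reversedRows_orthonormalizedRows (A : Matrix ι ι ℝ) :
    reversedRows (orthonormalizedRows A) = gramSchmidtNormed ℝ (reversedRows A) :=
  rfl

lemma orthonormalizedRows_mul_transpose {A : Matrix ι ι ℝ} (hA : A.det ≠ 0) :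
    orthonormalizedRows A * (orthonormalizedRows A)ᵀ = 1 :=
  orthonormal_reversedRows_iff.mp
    (gramSchmidtNormed_orthonormal (linearIndependent_reversedRows hA))

lemma mul_transpose_orthonormalizedRows_mul_self {A : Matrix ι ι ℝ} (hA : A.det ≠ 0) :
    A * (orthonormalizedRows A)ᵀ * orthonormalizedRows A = A := by
  rw [Matrix.mul_assoc, mul_eq_one_comm.mp (orthonormalizedRows_mul_transpose hA), Matrix.mul_one]

lemma orthonormalizedRows_of_mul_transpose_eq_one {A : Matrix ι ι ℝ} (hA : A * Aᵀ = 1) :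
    orthonormalizedRows A = A := by
  ext i j
  simp only [orthonormalizedRows,
    gramSchmidtNormed_of_orthonormal (orthonormal_reversedRows_iff.mpr hA)]
  rfl

lemma continuousAt_orthonormalizedRows {A : Matrix ι ι ℝ} (hA : A.det ≠ 0) :
    ContinuousAt orthonormalizedRows A := by
  refine continuousAt_pi.mpr fun i => ?_
  have hind := linearIndependent_reversedRows hA
  have hrow := (continuousAt_gramSchmidtNormed (𝕜 := ℝ) hind (toDual i)).comp
    continuous_reversedRows.continuousAt
  exact (PiLp.continuous_ofLp 2 _).continuousAt.comp hrow

lemma isUpperTriangular_mul_transpose_orthonormalizedRows (A : Matrix ι ι ℝ) :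
    (A * (orthonormalizedRows A)ᵀ).IsUpperTriangular := fun i j (hji : j < i) => by
  rw [mul_transpose_apply_eq_inner_reversedRows, reversedRows_orthonormalizedRows,
    gramSchmidtNormed, inner_smul_left,
    gramSchmidt_inv_triangular ℝ (reversedRows A) (toDual_lt_toDual.mpr hji), mul_zero]

lemma mul_transpose_orthonormalizedRows_diag_pos {A : Matrix ι ι ℝ} (hA : A.det ≠ 0) (i : ι) :
    0 < (A * (orthonormalizedRows A)ᵀ) i i := by
  rw [mul_transpose_apply_eq_inner_reversedRows, reversedRows_orthonormalizedRows,
    inner_gramSchmidtNormed_self_left]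
  exact norm_pos_iff.mpr (gramSchmidt_ne_zero (toDual i) (linearIndependent_reversedRows hA))

end RowOrthonormalization

section FactorSet

variable {n : ℕ} {A u l q : Matrix (Fin n) (Fin n) ℝ}

lemma IsUpperPos.isUpperTriangular (hu : IsUpperPos u) : u.IsUpperTriangular :=
  fun i j => hu.1 i j

lemma IsUpperPos.det_pos (hu : IsUpperPos u) : 0 < u.det := by
  rw [det_of_isUpperTriangular hu.isUpperTriangular]
  exact Finset.prod_pos fun i _ => hu.2 i

lemma isUpperPos_mul_transpose_orthonormalizedRows (hA : A.det ≠ 0) :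
    IsUpperPos (A * (orthonormalizedRows A)ᵀ) :=
  ⟨fun _ _ hji => isUpperTriangular_mul_transpose_orthonormalizedRows A hji,
    mul_transpose_orthonormalizedRows_diag_pos hA⟩

lemma isSO_orthonormalizedRows (hA : 0 < A.det) : IsSO (orthonormalizedRows A) := by
  have horth := orthonormalizedRows_mul_transpose hA.ne'
  refine ⟨mul_eq_one_comm.mp horth, ?_⟩
  have hsq : (orthonormalizedRows A).det ^ 2 = 1 := by
    simpa [sq] using congrArg det horth
  have hpos : 0 < (orthonormalizedRows A).det := by
    have hmul := congrArg det (mul_transpose_orthonormalizedRows_mul_self hA.ne')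
    rw [det_mul] at hmul
    exact pos_of_mul_pos_right (hmul ▸ hA)
      (isUpperPos_mul_transpose_orthonormalizedRows hA.ne').det_pos.le
  exact (pow_eq_one_iff_of_nonneg hpos.le two_ne_zero).mp hsq

lemma hasNonzeroTrailingMinors_of_factorization {d : Fin n → ℝ} (hu : IsUpperPos u)
    (hl : IsUnitLower l) (hd : ∀ i, d i = 1 ∨ d i = -1) :
    HasNonzeroTrailingMinors (u * l * diagonal d) := by
  have hld : (l * diagonal d).IsLowerTriangular :=
    .mul (fun i j => hl.2 i j) (blockTriangular_diagonal d)
  rw [Matrix.mul_assoc,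
    hasNonzeroTrailingMinors_mul_iff hu.isUpperTriangular fun i => (hu.2 i).ne']
  refine hasNonzeroTrailingMinors_of_isLowerTriangular hld fun i => ?_
  rcases hd i with h | h <;> simp [hl.1 i, h]

lemma exists_factorization (hA : HasNonzeroTrailingMinors A) (hdet : 0 < A.det) :
    ∃ u l : Matrix (Fin n) (Fin n) ℝ, ∃ d : Fin n → ℝ,
      IsUpperPos u ∧ IsUnitLower l ∧ (∀ i, d i = 1 ∨ d i = -1) ∧
      (diagonal d).det = 1 ∧ A = u * l * diagonal d := by
  obtain ⟨U, L, c, hU, hUdiag, hL, hLdiag, hc, rfl⟩ :=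
    exists_unitUpper_mul_diagonal_mul_unitLower hA
  let s : Fin n → ℝ := fun i => SignType.sign (c i)
  have hs : ∀ i, s i = 1 ∨ s i = -1 := fun i => by
    rcases (hc i).lt_or_gt with h | h <;> simp [s, h]
  have hss : ∀ i, s i * s i = 1 := fun i => mul_self_eq_one_iff.mpr (hs i)
  have hprod : 0 < ∏ i, c i := by
    simpa [det_of_isUpperTriangular hU, det_of_isLowerTriangular _ hL, hUdiag, hLdiag] using hdet
  refine ⟨U * diagonal (fun i => |c i|), diagonal s * L * diagonal s, s,
    ⟨fun i j hji => ?_, fun i => ?_⟩, ⟨fun i => ?_, fun i j hij => ?_⟩, hs, ?_, ?_⟩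
  · rw [mul_diagonal, hU hji, zero_mul]
  · rw [mul_diagonal, hUdiag, one_mul]
    exact abs_pos.mpr (hc i)
  · rw [mul_diagonal, diagonal_mul, hLdiag, mul_one, hss]
  · rw [mul_diagonal, diagonal_mul, hL hij, mul_zero, zero_mul]
  · calc (diagonal s).det = SignType.castHom (signHom (∏ i, c i)) := by
          rw [det_diagonal, map_prod, map_prod]; rfl
      _ = 1 := by rw [signHom_apply, sign_pos hprod, map_one]
  · have hsquare : diagonal s * diagonal s = 1 := by
      simp only [diagonal_mul_diagonal, hss, diagonal_one]
    have habs : diagonal (fun i => |c i|) * diagonal s = diagonal c := by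
      simp only [diagonal_mul_diagonal, s, abs_mul_sign]
    simp only [← habs, Matrix.mul_assoc, hsquare, Matrix.mul_one]

lemma mem_factorSet_iff (hq : 0 < q.det) (k : {k : Matrix (Fin n) (Fin n) ℝ // IsSO k}) :
    k ∈ FactorSet q ↔ HasNonzeroTrailingMinors (k.1 * q⁻¹) := by
  have hqu : IsUnit q.det := hq.ne'.isUnit
  constructor
  · rintro ⟨u, l, d, hu, hl, hd, -, hk⟩
    rw [hk, mul_nonsing_inv_cancel_right _ _ hqu]
    exact hasNonzeroTrailingMinors_of_factorization hu hl hd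
  · intro hminors
    have hdet : 0 < (k.1 * q⁻¹).det := by
      rw [det_mul, k.2.2, one_mul, det_nonsing_inv, Ring.inverse_eq_inv']
      exact inv_pos.mpr hq
    obtain ⟨u, l, d, hu, hl, hd, hddet, hk⟩ := exists_factorization hminors hdet
    exact ⟨u, l, d, hu, hl, hd, hddet, by rw [← hk, nonsing_inv_mul_cancel_right _ _ hqu]⟩

lemma isOpen_factorSet (hq : 0 < q.det) : IsOpen (FactorSet q) := by
  have hpre : FactorSet q = (fun k : {k : Matrix (Fin n) (Fin n) ℝ // IsSO k} => k.1 * q⁻¹) ⁻¹'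
      {A | HasNonzeroTrailingMinors A} := Set.ext (mem_factorSet_iff hq)
  rw [hpre]
  exact isOpen_setOf_hasNonzeroTrailingMinors.preimage
    (continuous_subtype_val.matrix_mul continuous_const)

lemma orthonormalizedRows_mem_image_factorSet (hq : 0 < q.det) (hA : 0 < A.det)
    (hminors : HasNonzeroTrailingMinors (A * q⁻¹)) :
    orthonormalizedRows A ∈ Subtype.val '' FactorSet q := by
  refine ⟨⟨_, isSO_orthonormalizedRows hA⟩, (mem_factorSet_iff hq _).mpr ?_, rfl⟩
  have hu := isUpperPos_mul_transpose_orthonormalizedRows hA.ne'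
  rwa [← hasNonzeroTrailingMinors_mul_iff hu.isUpperTriangular fun i => (hu.2 i).ne',
    ← Matrix.mul_assoc, mul_transpose_orthonormalizedRows_mul_self hA.ne']

lemma dense_factorSet (hq : 0 < q.det) : Dense (FactorSet q) := by
  intro k
  have hpath : Tendsto (fun t : ℝ => k.1 + t • q) (𝓝[≠] 0) (𝓝 k.1) := by
    have hcont : Continuous fun t : ℝ => k.1 + t • q := by fun_prop
    simpa using (hcont.tendsto 0).mono_left nhdsWithin_le_nhds
  have hlim : Tendsto (fun t : ℝ => orthonormalizedRows (k.1 + t • q)) (𝓝[≠] 0) (𝓝 k.1) := by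
    have hk : orthonormalizedRows k.1 = k.1 :=
      orthonormalizedRows_of_mul_transpose_eq_one (mul_eq_one_comm.mp k.2.1)
    have hcont := (continuousAt_orthonormalizedRows (A := k.1) (by simp [k.2.2])).tendsto
    rw [hk] at hcont
    exact hcont.comp hpath
  have hdet : ∀ᶠ t in 𝓝[≠] (0 : ℝ), 0 < (k.1 + t • q).det :=
    (((continuous_id.matrix_det).tendsto k.1).comp hpath).eventually_const_lt (by simp [k.2.2])
  have hminors : ∀ᶠ t in 𝓝[≠] (0 : ℝ), HasNonzeroTrailingMinors ((k.1 + t • q) * q⁻¹) := by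
    simpa only [Matrix.add_mul, Matrix.smul_mul, mul_nonsing_inv _ hq.ne'.isUnit] using
      eventually_hasNonzeroTrailingMinors_add_smul_one (k.1 * q⁻¹) 0
  refine closure_subtype.mpr (mem_closure_of_tendsto hlim ?_)
  filter_upwards [hdet, hminors] with t
  exact orthonormalizedRows_mem_image_factorSet hq

end FactorSet

theorem stmt_7_general {n : ℕ} {q : Matrix (Fin n) (Fin n) ℝ} (hq : 0 < q.det) :
    IsOpen (FactorSet q) ∧ Dense (FactorSet q) :=
  ⟨isOpen_factorSet hq, dense_factorSet hq⟩

theorem stmt_7 (n : ℕ) (hn : 1 ≤ n) (q : Matrix (Fin n) (Fin n) ℝ)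
    (hq : IsSignedPerm q) (hdet : q.det = 1) :
    IsOpen (FactorSet q) ∧ Dense (FactorSet q) :=
  stmt_7_general (hdet ▸ one_pos)
end

section
/- Let n ≥ 1 and let p be a profile. Let Y be a real symmetric n×n matrix with trace 0, having n distinct (real) eigenvalues, and having profile p. Then for every real n×n matrix Z with trace 0 there exist a skew-symmetric matrix K and a real n×n matrix V with trace 0 and profile p such that Z = KY − YK + V. -/
open Matrix Polynomial

/-- A profile: a set of index pairs `(i,j)` with `j < i`, closed under moving
towards the diagonal. -/
def IsProfile {n : ℕ} (p : Set (Fin n × Fin n)) : Prop :=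
  (∀ ij ∈ p, ij.2 < ij.1) ∧
  ∀ ij ∈ p, ∀ i' j' : Fin n, j' < i' → i' ≤ ij.1 → ij.2 ≤ j' → (i', j') ∈ p

/-- `M` has profile `p` if all its strictly lower triangular entries outside `p` vanish. -/
def HasProfile {n : ℕ} (M : Matrix (Fin n) (Fin n) ℝ) (p : Set (Fin n × Fin n)) : Prop :=
  ∀ i j : Fin n, j < i → (i, j) ∉ p → M i j = 0

/-!
Let `S` be a set of positions which contains the diagonal and is closed under moving up and to the
right. By duality for the trace form, it suffices to show that `N = 0` whenever `N` is orthogonal to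
all `[K, Y]` with `K` skew-symmetric and to all matrices supported on `S`. The second condition
makes `N` vanish on the transpose of `S`, and then `[Y, N]` vanishes on and below the diagonal; the
first makes `[Y, N]` symmetric. So `Y` and `N` commute. As `Y` is symmetric with distinct
eigenvalues, everything in its commutant is symmetric; and `N`, being symmetric and zero on and
below the diagonal, is zero.
-/

section Commutant

variable {ι R : Type*} [Fintype ι] [DecidableEq ι]

lemma isDiag_of_commute_diagonal [CommRing R] [NoZeroDivisors R] {d : ι → R}
    (hd : Function.Injective d) {A : Matrix ι ι R} (hA : Commute (diagonal d) A) : A.IsDiag := by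
  intro i j hij
  have hentry : d i * A i j = A i j * d j := by
    simpa only [diagonal_mul, mul_diagonal] using congrFun₂ hA.eq i j
  have hprod : (d i - d j) * A i j = 0 := by rw [sub_mul, hentry, mul_comm (A i j), sub_self]
  exact (mul_eq_zero.mp hprod).resolve_left (sub_ne_zero.mpr (hd.ne hij))

lemma isSymm_of_isSymm_transpose_mul_mul [CommRing R] {P A : Matrix ι ι R}
    (hP : IsUnit P) (h : (Pᵀ * A * P).IsSymm) : A.IsSymm := by
  have hcongr : Pᵀ * Aᵀ * P = Pᵀ * A * P := by
    simpa only [IsSymm, transpose_mul, transpose_transpose, Matrix.mul_assoc] using h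
  exact ((isUnit_transpose P).mpr hP).mul_left_cancel (hP.mul_right_cancel hcongr)

/- If the columns `vᵢ` of `P` are eigenvectors of `Y`, then `vᵢᵀ N vⱼ` vanishes for `i ≠ j`, because
`dᵢ vᵢᵀ N vⱼ = vᵢᵀ Y N vⱼ = vᵢᵀ N Y vⱼ = dⱼ vᵢᵀ N vⱼ`. -/
lemma isSymm_of_commute_of_mul_eq_mul_diagonal [CommRing R] [NoZeroDivisors R]
    {Y N P : Matrix ι ι R} {d : ι → R} (hY : Y.IsSymm) (hP : IsUnit P)
    (hd : Function.Injective d) (hYP : Y * P = P * diagonal d) (hN : Commute Y N) :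
    N.IsSymm := by
  have hPY : Pᵀ * Y = diagonal d * Pᵀ := by
    simpa only [transpose_mul, hY.eq, diagonal_transpose] using congrArg transpose hYP
  have hcomm : Commute (diagonal d) (Pᵀ * N * P) := by
    calc diagonal d * (Pᵀ * N * P) = diagonal d * Pᵀ * N * P := by simp only [Matrix.mul_assoc]
      _ = Pᵀ * (Y * N) * P := by rw [← hPY]; simp only [Matrix.mul_assoc]
      _ = Pᵀ * N * (Y * P) := by rw [hN.eq]; simp only [Matrix.mul_assoc]
      _ = Pᵀ * N * P * diagonal d := by rw [hYP]; simp only [Matrix.mul_assoc]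
  exact isSymm_of_isSymm_transpose_mul_mul hP (isDiag_of_commute_diagonal hd hcomm).isSymm

variable {k : Type*} [Field k]

lemma exists_injective_isRoot_charpoly {A : Matrix ι ι k} (hsplit : A.charpoly.Splits)
    (hsep : A.charpoly.Separable) :
    ∃ d : ι → k, Function.Injective d ∧ ∀ i, A.charpoly.IsRoot (d i) := by
  classical
  have hcard : Fintype.card ι = Fintype.card A.charpoly.roots.toFinset := by
    rw [Fintype.card_coe, Multiset.toFinset_card_of_nodup (nodup_roots hsep),
      ← hsplit.natDegree_eq_card_roots, charpoly_natDegree_eq_dim]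
  let e := Fintype.equivOfCardEq hcard
  exact ⟨fun i ↦ e i, Subtype.val_injective.comp e.injective,
    fun i ↦ isRoot_of_mem_roots (Multiset.mem_toFinset.mp (e i).2)⟩

lemma exists_isUnit_mul_eq_mul_diagonal {A : Matrix ι ι k} {d : ι → k}
    (hd : Function.Injective d) (hroot : ∀ i, A.charpoly.IsRoot (d i)) :
    ∃ P : Matrix ι ι k, IsUnit P ∧ A * P = P * diagonal d := by
  have heigen (i : ι) : ∃ v, Module.End.HasEigenvector A.toLin' (d i) v := by
    refine Module.End.HasEigenvalue.exists_hasEigenvector ?_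
    rw [Module.End.hasEigenvalue_iff_isRoot_charpoly, charpoly_toLin']
    exact hroot i
  choose v hv using heigen
  refine ⟨(of v)ᵀ, linearIndependent_cols_iff_isUnit.mp
    (Module.End.eigenvectors_linearIndependent' _ d hd v hv), ?_⟩
  ext i j
  rw [mul_diagonal, transpose_apply, of_apply, mul_comm]
  exact congrFun (hv j).apply_eq_smul i

lemma isSymm_of_commute_of_separable_charpoly {Y N : Matrix ι ι k} (hY : Y.IsSymm)
    (hsep : Y.charpoly.Separable) (hN : Commute Y N) : N.IsSymm := by
  let f := algebraMap k (AlgebraicClosure k)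
  have hsep' : (Y.map f).charpoly.Separable := by
    rw [charpoly_map]
    exact hsep.map
  obtain ⟨d, hd, hroot⟩ :=
    exists_injective_isRoot_charpoly (IsAlgClosed.splits (Y.map f).charpoly) hsep'
  obtain ⟨P, hP, hYP⟩ := exists_isUnit_mul_eq_mul_diagonal hd hroot
  exact (isSymm_map_iff f.injective).mp
    (isSymm_of_commute_of_mul_eq_mul_diagonal (hY.map f) hP hd hYP (hN.map f.mapMatrix))

end Commutant

section TraceDuality

variable {m n R : Type*} [Fintype m] [Fintype n]

lemma exists_forall_eq_trace_mul [CommSemiring R] (f : Matrix m n R →ₗ[R] R) :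
    ∃ N : Matrix n m R, ∀ M, f M = (N * M).trace := by
  classical
  let N : Matrix n m R := of fun j i ↦ f (single i j 1)
  have hf : f = traceLinearMap n R R ∘ₗ mulLeftLinearMap n R N := by
    refine ext_linearMap R fun i j ↦ LinearMap.ext_ring ?_
    simp [N, trace_mul_single]
  exact ⟨N, fun M ↦ congrArg (· M) hf⟩

lemma eq_top_of_forall_trace_mul_eq_zero {k : Type*} [Field k] {W : Submodule k (Matrix m n k)}
    (hW : ∀ N : Matrix n m k, (∀ M ∈ W, (N * M).trace = 0) → N = 0) : W = ⊤ := by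
  by_contra hne
  obtain ⟨f, hf, hWf⟩ := Submodule.exists_le_ker_of_lt_top W (lt_top_iff_ne_top.mpr hne)
  obtain ⟨N, hfN⟩ := exists_forall_eq_trace_mul f
  have hN : N = 0 := hW N fun M hM ↦ (hfN M).symm.trans (hWf hM)
  exact hf (LinearMap.ext fun M ↦ by simp [hfN, hN])

lemma isSymm_of_forall_skew_trace_mul_eq_zero [Ring R] {B : Matrix n n R}
    (hB : ∀ K : Matrix n n R, Kᵀ = -K → (B * K).trace = 0) : B.IsSymm := by
  classical
  refine IsSymm.ext fun i j ↦ ?_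
  have hK : (single i j 1 - single j i 1 : Matrix n n R)ᵀ = -(single i j 1 - single j i 1) := by
    rw [transpose_sub, transpose_single, transpose_single, neg_sub]
  simpa [mul_sub, trace_mul_single, sub_eq_zero] using hB _ hK

lemma mem_skewAdjointMatricesSubmodule_one [CommRing R] [DecidableEq n] {K : Matrix n n R} :
    K ∈ skewAdjointMatricesSubmodule 1 ↔ Kᵀ = -K := by
  simp only [mem_skewAdjointMatricesSubmodule, Matrix.IsSkewAdjoint, Matrix.IsAdjointPair, mul_one,
    one_mul]

lemma trace_mul_lie [CommRing R] (A B C : Matrix n n R) :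
    (A * ⁅B, C⁆).trace = (⁅C, A⁆ * B).trace := by
  simp only [Ring.lie_def, mul_sub, sub_mul, trace_sub, ← Matrix.mul_assoc]
  rw [trace_mul_cycle A B C]

end TraceDuality

section Support

variable {m n : Type*}

/-- The matrices whose nonzero entries all lie in the set of positions `S`. -/
def supportedMatrices (R : Type*) [Semiring R] (S : Set (m × n)) : Submodule R (Matrix m n R) where
  carrier := {M | ∀ i j, (i, j) ∉ S → M i j = 0}
  zero_mem' _ _ _ := rfl
  add_mem' hA hB i j hij := by rw [Matrix.add_apply, hA i j hij, hB i j hij, add_zero]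
  smul_mem' c A hA i j hij := by rw [Matrix.smul_apply, hA i j hij, smul_zero]

lemma apply_eq_zero_of_forall_trace_mul_eq_zero {R : Type*} [Fintype m] [Fintype n] [Semiring R]
    {S : Set (m × n)} {N : Matrix n m R}
    (hN : ∀ M ∈ supportedMatrices R S, (N * M).trace = 0) {i : m} {j : n} (hij : (i, j) ∈ S) :
    N j i = 0 := by
  classical
  have hsingle : single i j 1 ∈ supportedMatrices R S := by
    intro a b hab
    refine single_apply_of_ne _ _ _ _ _ ?_
    rintro ⟨rfl, rfl⟩
    exact hab hij
  simpa [trace_mul_single] using hN _ hsingle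

end Support

section Staircase

variable {ι R : Type*} [LinearOrder ι]

/-- A set of matrix positions which contains the diagonal and is closed under moving up and to the
right. A profile `p` corresponds to the staircase `{(i, j) | j < i → (i, j) ∈ p}`, which adds the
diagonal and all positions above it to `p`. -/
structure IsStaircase (S : Set (ι × ι)) : Prop where
  diag_mem (i : ι) : (i, i) ∈ S
  mem_of_le_of_le {i j i' j' : ι} : (i, j) ∈ S → i' ≤ i → j ≤ j' → (i', j') ∈ S

lemma eq_zero_of_isSymm_of_forall_le [Zero R] {A : Matrix ι ι R} (hA : A.IsSymm)
    (hlower : ∀ i j, j ≤ i → A i j = 0) : A = 0 := by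
  ext i j
  rcases le_total j i with hji | hij
  · exact hlower i j hji
  · rw [← hA.apply i j]
    exact hlower j i hij

lemma IsStaircase.lie_apply_eq_zero [Fintype ι] [Ring R] {S : Set (ι × ι)} (hS : IsStaircase S)
    {Y N : Matrix ι ι R} (hY : Y ∈ supportedMatrices R S) (hN : ∀ i j, (i, j) ∈ S → N j i = 0)
    {i j : ι} (hji : j ≤ i) : ⁅Y, N⁆ i j = 0 := by
  have hYN (l : ι) : Y i l * N l j = 0 := by
    by_cases hl : (i, l) ∈ S
    · rw [hN j l (hS.mem_of_le_of_le hl hji le_rfl), mul_zero]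
    · rw [hY i l hl, zero_mul]
  have hNY (l : ι) : N i l * Y l j = 0 := by
    by_cases hl : (l, j) ∈ S
    · rw [hN l i (hS.mem_of_le_of_le hl le_rfl hji), zero_mul]
    · rw [hY l j hl, mul_zero]
  simp only [Ring.lie_def, Matrix.sub_apply, mul_apply, hYN, hNY, Finset.sum_const_zero, sub_zero]

variable {k : Type*} [Field k] [Fintype ι]

lemma IsStaircase.map_commutator_skew_sup_supportedMatrices_eq_top {S : Set (ι × ι)}
    (hS : IsStaircase S) {Y : Matrix ι ι k} (hY : Y ∈ supportedMatrices k S)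
    (hcomm : ∀ N, Commute Y N → N.IsSymm) :
    (skewAdjointMatricesSubmodule 1).map (LinearMap.mulRight k Y - LinearMap.mulLeft k Y) ⊔
      supportedMatrices k S = ⊤ := by
  refine eq_top_of_forall_trace_mul_eq_zero fun N hN ↦ ?_
  have hNS (i j : ι) (hij : (i, j) ∈ S) : N j i = 0 :=
    apply_eq_zero_of_forall_trace_mul_eq_zero
      (fun M hM ↦ hN M (Submodule.mem_sup_right hM)) hij
  have hsymm : ⁅Y, N⁆.IsSymm := by
    refine isSymm_of_forall_skew_trace_mul_eq_zero fun K hK ↦ ?_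
    rw [← trace_mul_lie]
    exact hN ⁅K, Y⁆ (Submodule.mem_sup_left (Submodule.mem_map_of_mem
      (mem_skewAdjointMatricesSubmodule_one.mpr hK)))
  have hlie : ⁅Y, N⁆ = 0 :=
    eq_zero_of_isSymm_of_forall_le hsymm fun i j ↦ hS.lie_apply_eq_zero hY hNS
  exact eq_zero_of_isSymm_of_forall_le (hcomm N (commute_iff_lie_eq.mpr hlie))
    fun i j hji ↦ hNS j i (hS.mem_of_le_of_le (hS.diag_mem j) le_rfl hji)

end Staircase

section Profile

variable {n : ℕ} {p : Set (Fin n × Fin n)}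

lemma IsProfile.isStaircase (hp : IsProfile p) :
    IsStaircase {ij : Fin n × Fin n | ij.2 < ij.1 → ij ∈ p} where
  diag_mem i hi := (lt_irrefl i hi).elim
  mem_of_le_of_le {_ _ i' j'} hij hi hj hlt :=
    hp.2 _ (hij (hj.trans_lt (hlt.trans_le hi))) i' j' hlt hi hj

lemma mem_supportedMatrices_iff_hasProfile {M : Matrix (Fin n) (Fin n) ℝ} :
    M ∈ supportedMatrices ℝ {ij : Fin n × Fin n | ij.2 < ij.1 → ij ∈ p} ↔ HasProfile M p :=
  forall₂_congr fun _ _ ↦ by simp only [Set.mem_ofPred_eq, Classical.not_imp, and_imp]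

end Profile

theorem stmt_11_general {ι k : Type*} [Fintype ι] [LinearOrder ι] [Field k] {S : Set (ι × ι)}
    (hS : IsStaircase S) {Y : Matrix ι ι k} (hsymm : Y.IsSymm) (hsep : Y.charpoly.Separable)
    (hY : Y ∈ supportedMatrices k S) (Z : Matrix ι ι k) :
    ∃ K V : Matrix ι ι k, Kᵀ = -K ∧ V.trace = Z.trace ∧ V ∈ supportedMatrices k S ∧
      Z = K * Y - Y * K + V := by
  have htop := hS.map_commutator_skew_sup_supportedMatrices_eq_top hY
    fun _ ↦ isSymm_of_commute_of_separable_charpoly hsymm hsep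
  obtain ⟨_, ⟨K, hK, rfl⟩, V, hV, rfl⟩ := Submodule.mem_sup.mp (htop ▸ Submodule.mem_top (x := Z))
  refine ⟨K, V, mem_skewAdjointMatricesSubmodule_one.mp hK, ?_, hV, rfl⟩
  simp [trace_mul_comm Y K]

theorem stmt_11 (n : ℕ) (hn : 1 ≤ n) (p : Set (Fin n × Fin n)) (hp : IsProfile p)
    (Y : Matrix (Fin n) (Fin n) ℝ) (hsymm : Yᵀ = Y) (htr : Y.trace = 0)
    (heig : ∃ lam : Fin n → ℝ, Function.Injective lam ∧
      Y.charpoly = ∏ i : Fin n, (Polynomial.X - Polynomial.C (lam i)))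
    (hYp : HasProfile Y p) :
    ∀ Z : Matrix (Fin n) (Fin n) ℝ, Z.trace = 0 →
      ∃ K V : Matrix (Fin n) (Fin n) ℝ, Kᵀ = -K ∧ V.trace = 0 ∧ HasProfile V p ∧
        Z = K * Y - Y * K + V := by
  intro Z hZ
  obtain ⟨lam, hinj, hchar⟩ := heig
  have hsep : Y.charpoly.Separable := hchar ▸ separable_prod_X_sub_C_iff.mpr hinj
  obtain ⟨K, V, hK, hV, hVp, hZV⟩ := stmt_11_general hp.isStaircase hsymm hsep
    (mem_supportedMatrices_iff_hasProfile.mpr hYp) Z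
  exact ⟨K, V, hK, hV.trans hZ, mem_supportedMatrices_iff_hasProfile.mp hVp, hZV⟩
end
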